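/- Let P = z₁z₂z₃², Q = z₁²z₂z₃³, R = z₁z₂z₃³ (so d = deg P + deg Q = 10 and deg P + deg Q = 2·deg R). Then the real vector space g_c has dimension exactly 3. -/

import Mathlib

open MvPolynomial Complex

noncomputable section

/-- `Φ(z) = P(z)·conj(Q(z)) + Q(z)·conj(P(z)) + R(z)·conj(R(z))`, so that the model
hypersurface is `M = {(z,w) : Im w = Φ(z)}`. -/
def Phi (P Q R : MvPolynomial (Fin 3) ℂ) (z : Fin 3 → ℂ) : ℂ :=
  eval z P * (starRingEnd ℂ) (eval z Q) + eval z Q * (starRingEnd ℂ) (eval z P) +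
    eval z R * (starRingEnd ℂ) (eval z R)

/-- `Φ_j(z) = (∂P/∂z_j)(z)·conj(Q(z)) + (∂Q/∂z_j)(z)·conj(P(z)) + (∂R/∂z_j)(z)·conj(R(z))`. -/
def PhiD (P Q R : MvPolynomial (Fin 3) ℂ) (j : Fin 3) (z : Fin 3 → ℂ) : ℂ :=
  eval z (pderiv j P) * (starRingEnd ℂ) (eval z Q) +
    eval z (pderiv j Q) * (starRingEnd ℂ) (eval z P) +
    eval z (pderiv j R) * (starRingEnd ℂ) (eval z R)

/-- `g_c`: rigid infinitesimal CR automorphisms `Σ f_j(z) ∂/∂z_j` of `M` all of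
whose monomials have total degree at least `2` and at most `d`. -/
def gcSet (P Q R : MvPolynomial (Fin 3) ℂ) (d : ℕ) : Set (Fin 3 → MvPolynomial (Fin 3) ℂ) :=
  {f | (∀ j, ∀ m ∈ (f j).support, 2 ≤ (m.sum fun _ e => e) ∧ (m.sum fun _ e => e) ≤ d) ∧
       ∀ z : Fin 3 → ℂ, (∑ j, eval z (f j) * PhiD P Q R j z).re = 0}

/-!
Write `D f` for the derivation `∑ f_j ∂/∂z_j`. The tangency condition says that
`D f P · conj Q + D f Q · conj P + D f R · conj R` has vanishing real part. Polarizing it and using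
that `P`, `Q`, `R` are linearly independent, it says that `(D f P, D f Q, D f R)` is the image of
`(Q, P, R)` under a skew-Hermitian matrix. Since `f` vanishes to order two, `D f` raises degrees,
and as `deg P < deg R < deg Q` the only entries of the matrix that survive are those in
`D f P = i b Q + a R`, `D f Q = 0`, `D f R = -conj a Q` with `a` complex and `b` real.
For the monomials at hand every such pair `(a, b)` comes from exactly one `f`.
-/

open scoped ComplexConjugate Matrix

section Polarization

variable {σ ι : Type*}

theorem eq_zero_of_eval_ofReal_eq_zero {p : MvPolynomial σ ℂ}
    (h : ∀ x : σ → ℝ, eval (fun i => (x i : ℂ)) p = 0) : p = 0 := by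
  refine funext_set (fun _ => Set.range ((↑) : ℝ → ℂ))
    (fun _ => Set.infinite_range_of_injective ofReal_injective) fun x hx => ?_
  choose r hr using fun i => hx i (Set.mem_univ i)
  rw [map_zero, ← funext hr, h]

theorem eq_zero_of_eval_conj_eq_zero {p : MvPolynomial (σ ⊕ σ) ℂ}
    (h : ∀ z : σ → ℂ, eval (Sum.elim z fun j => conj (z j)) p = 0) : p = 0 := by
  -- In the coordinates `z = x + iy`, `w = x - iy` the locus `w = conj z` is the set of real points.
  let toReal : σ ⊕ σ → MvPolynomial (σ ⊕ σ) ℂ :=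
    Sum.elim (fun j => X (Sum.inl j) + C I * X (Sum.inr j))
      (fun j => X (Sum.inl j) - C I * X (Sum.inr j))
  let ofReal : σ ⊕ σ → MvPolynomial (σ ⊕ σ) ℂ :=
    Sum.elim (fun j => C (1 / 2) * (X (Sum.inl j) + X (Sum.inr j)))
      (fun j => -C I * C (1 / 2) * (X (Sum.inl j) - X (Sum.inr j)))
  have hinv : (bind₁ ofReal).comp (bind₁ toReal) = AlgHom.id ℂ _ := by
    have hI : (C I * C I : MvPolynomial (σ ⊕ σ) ℂ) = -1 := by simp [← C_mul]
    have hhalf : (C (1 / 2) * 2 : MvPolynomial (σ ⊕ σ) ℂ) = 1 := by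
      rw [← map_ofNat C 2, ← C_mul]
      simp
    ext1 (j | j) <;>
      simp only [toReal, ofReal, AlgHom.comp_apply, AlgHom.id_apply, bind₁_X_right, Sum.elim_inl,
        Sum.elim_inr, map_add, map_sub, map_mul, bind₁_C_right]
    · linear_combination
        X (Sum.inl j) * hhalf - C (1 / 2) * (X (Sum.inl j) - X (Sum.inr j)) * hI
    · linear_combination
        X (Sum.inr j) * hhalf + C (1 / 2) * (X (Sum.inl j) - X (Sum.inr j)) * hI
  have hreal : bind₁ toReal p = 0 := by
    refine eq_zero_of_eval_ofReal_eq_zero fun x => ?_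
    rw [← h fun j => x (Sum.inl j) + I * x (Sum.inr j), ← aeval_eq_eval, aeval_bind₁,
      aeval_eq_eval]
    congr 2
    ext1 (j | j) <;> simp [toReal, sub_eq_add_neg]
  rw [← AlgHom.id_apply (R := ℂ) p, ← hinv, AlgHom.comp_apply, hreal, map_zero]

theorem eval_conj_map_conj (z : σ → ℂ) (p : MvPolynomial σ ℂ) :
    eval (fun j => conj (z j)) (map (starRingEnd ℂ) p) = conj (eval z p) := by
  rw [eval_map]
  exact (eval₂_comp_left (starRingEnd ℂ) (RingHom.id ℂ) z p).symm

variable [Fintype ι] {A B : ι → MvPolynomial σ ℂ}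

theorem polarization (h : ∀ z, (∑ i, eval z (A i) * conj (eval z (B i))).re = 0) (w : σ → ℂ) :
    ∑ i, (conj (eval w (B i)) • A i + conj (eval w (A i)) • B i) = 0 := by
  have hdiag : ∑ i, (rename Sum.inl (A i) * rename Sum.inr (map (starRingEnd ℂ) (B i)) +
      rename Sum.inl (B i) * rename Sum.inr (map (starRingEnd ℂ) (A i))) = 0 := by
    refine eq_zero_of_eval_conj_eq_zero fun z => ?_
    have hz := add_conj (∑ i, eval z (A i) * conj (eval z (B i)))
    rw [h z] at hz
    simpa [-eval_map, eval_rename, Function.comp_def, eval_conj_map_conj,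
      Finset.sum_add_distrib, mul_comm] using hz
  refine MvPolynomial.funext fun z => ?_
  have hzw := congrArg (eval (Sum.elim z fun j => conj (w j))) hdiag
  simpa [-eval_map, eval_rename, Function.comp_def, eval_conj_map_conj, mul_comm] using hzw

theorem re_sum_eval_mul_conj_eq_zero_of_conjTranspose_eq_neg {t : Matrix ι ι ℂ} (ht : tᴴ = -t)
    (hA : ∀ i, A i = ∑ k, t i k • B k) (z : σ → ℂ) :
    (∑ i, eval z (A i) * conj (eval z (B i))).re = 0 := by
  have hconj (i k : ι) : conj (t i k) = -t k i := congrFun (congrFun ht k) i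
  set S := ∑ i, eval z (A i) * conj (eval z (B i)) with hS
  have hanti : conj S = -S := by
    simp only [hS, hA, map_sum, smul_eval, map_mul, conj_conj, hconj, Finset.sum_mul,
      ← Finset.sum_neg_distrib]
    rw [Finset.sum_comm]
    congr! 2
    ring
  exact self_eq_neg.1 (by simpa using congrArg re hanti)

theorem re_sum_eval_mul_conj_eq_zero_iff (hB : LinearIndependent ℂ B) :
    (∀ z, (∑ i, eval z (A i) * conj (eval z (B i))).re = 0) ↔
      ∃ t : Matrix ι ι ℂ, tᴴ = -t ∧ ∀ i, A i = ∑ k, t i k • B k := by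
  constructor
  · intro h
    -- `g` reads off coordinates along `B`; applied to the polarized identity it isolates `A k`.
    obtain ⟨g, hg⟩ := (Fintype.linearCombination ℂ B).exists_leftInverse_of_injective
      (LinearMap.ker_eq_bot.2 hB.fintypeLinearCombination_injective)
    have hcoord (c : ι → ℂ) : g (∑ i, c i • B i) = c := LinearMap.congr_fun hg c
    have hexp (k : ι) : A k = ∑ i, -conj (g (A i) k) • B i := by
      refine MvPolynomial.funext fun w => ?_
      have hw := congrFun (congrArg g (polarization h w)) k
      rw [Finset.sum_add_distrib, map_add, hcoord, map_sum] at hw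
      simp only [map_smul, Pi.add_apply, Finset.sum_apply, Pi.smul_apply, smul_eq_mul] at hw
      simpa [smul_eval, mul_comm, eq_neg_iff_add_eq_zero, add_comm] using congrArg conj hw
    have hskew (k i : ι) : g (A k) i = -conj (g (A i) k) := by
      rw [hexp k, hcoord]
    refine ⟨Matrix.of fun k => g (A k), ?_, fun k => ?_⟩
    · ext i k
      simp [hskew i k]
    · simpa only [← hskew, Matrix.of_apply] using hexp k
  · rintro ⟨t, ht, hA⟩
    exact re_sum_eval_mul_conj_eq_zero_of_conjTranspose_eq_neg ht hA

end Polarization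

section Homogeneous

variable {σ ι R : Type*}

theorem homogeneousComponent_sum_smul [CommSemiring R] [Fintype ι] {B : ι → MvPolynomial σ R}
    {n : ι → ℕ} (hB : ∀ i, (B i).IsHomogeneous (n i)) (hn : Function.Injective n) (t : ι → R)
    (k : ι) : homogeneousComponent (n k) (∑ i, t i • B i) = t k • B k := by
  classical
  simp [homogeneousComponent_of_mem (hB _), hn.eq_iff]

theorem linearIndependent_of_isHomogeneous [CommRing R] [IsDomain R] {B : ι → MvPolynomial σ R}
    {n : ι → ℕ} (hB : ∀ i, (B i).IsHomogeneous (n i)) (hn : Function.Injective n)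
    (hB0 : ∀ i, B i ≠ 0) : LinearIndependent R B := by
  let : DirectSum.Decomposition (homogeneousSubmodule σ R) := decomposition
  exact ((DirectSum.Decomposition.isInternal
    (homogeneousSubmodule σ R)).submodule_iSupIndep.comp hn).linearIndependent _ hB hB0

theorem homogeneousComponent_mul_eq_zero [CommSemiring R] {p q : MvPolynomial σ R} {a b n : ℕ}
    (hp : ∀ m ∈ p.support, a ≤ m.degree) (hq : q.IsHomogeneous b) (hn : n < a + b) :
    homogeneousComponent n (p * q) = 0 := by
  classical
  refine homogeneousComponent_eq_zero' _ _ fun m hm => ?_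
  obtain ⟨x, hx, y, hy, rfl⟩ := Finset.mem_add.1 (support_mul p q hm)
  have hxa : a ≤ x.degree := hp x hx
  have hyb : y.degree = b := by
    rw [Finsupp.degree_eq_weight_one]
    exact hq (mem_support_iff.1 hy)
  rw [map_add]
  lia

theorem mkDerivation_apply_eq_sum [CommSemiring R] [Fintype σ] (f : σ → MvPolynomial σ R)
    (p : MvPolynomial σ R) :
    mkDerivation R f p = ∑ j, f j * pderiv j p := by
  classical
  have hsum (p) : (∑ j, f j • pderiv j : Derivation R _ _) p = ∑ j, f j * pderiv j p := by
    rw [← Derivation.coeFnAddMonoidHom_apply, map_sum]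
    simp
  have h : mkDerivation R f = ∑ j, f j • pderiv j := derivation_ext fun i => by
    simp [hsum, mkDerivation_X, pderiv_X, Pi.single_apply]
  rw [h, hsum]

theorem homogeneousComponent_mkDerivation_eq_zero [CommSemiring R] [Finite σ]
    {f : σ → MvPolynomial σ R} {k n l : ℕ} (hf : ∀ j, ∀ m ∈ (f j).support, k + 1 ≤ m.degree)
    {p : MvPolynomial σ R} (hp : p.IsHomogeneous n) (hl : l < n + k) :
    homogeneousComponent l (mkDerivation R f p) = 0 := by
  cases nonempty_fintype σ
  rw [mkDerivation_apply_eq_sum, map_sum]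
  exact Finset.sum_eq_zero fun j _ =>
    homogeneousComponent_mul_eq_zero (hf j) hp.pderiv (by lia)

theorem eq_zero_of_mkDerivation_eq_sum_smul [CommRing R] [IsDomain R] [Finite σ]
    [Fintype ι] {B : ι → MvPolynomial σ R} {n : ι → ℕ} (hB : ∀ i, (B i).IsHomogeneous (n i))
    (hn : Function.Injective n) (hB0 : ∀ i, B i ≠ 0) {f : σ → MvPolynomial σ R}
    (hf : ∀ j, ∀ m ∈ (f j).support, 2 ≤ m.degree) {p : MvPolynomial σ R} {l : ℕ}
    (hp : p.IsHomogeneous l) {t : ι → R} (hD : mkDerivation R f p = ∑ i, t i • B i) {k : ι}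
    (hk : n k ≤ l) : t k = 0 := by
  have hcomp := homogeneousComponent_sum_smul hB hn t k
  rw [← hD, homogeneousComponent_mkDerivation_eq_zero hf hp (Nat.lt_succ_of_le hk)] at hcomp
  exact (smul_eq_zero.1 hcomp.symm).resolve_right (hB0 k)

end Homogeneous

section Characterization

theorem sum_eval_mul_PhiD (P Q R : MvPolynomial (Fin 3) ℂ) (f : Fin 3 → MvPolynomial (Fin 3) ℂ)
    (z : Fin 3 → ℂ) :
    ∑ j, eval z (f j) * PhiD P Q R j z =
      ∑ i, eval z (mkDerivation ℂ f (![P, Q, R] i)) * conj (eval z (![Q, P, R] i)) := by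
  simp only [PhiD, mkDerivation_apply_eq_sum, Fin.sum_univ_three, Matrix.cons_val, map_add,
    map_mul]
  ring

variable {P Q R : MvPolynomial (Fin 3) ℂ} {f : Fin 3 → MvPolynomial (Fin 3) ℂ} {d p q r : ℕ}

theorem mem_gcSet_iff (hP : P.IsHomogeneous p) (hQ : Q.IsHomogeneous q) (hR : R.IsHomogeneous r)
    (hP0 : P ≠ 0) (hQ0 : Q ≠ 0) (hR0 : R ≠ 0) (hpr : p < r) (hrq : r < q) :
    f ∈ gcSet P Q R d ↔
      (∀ j, ∀ m ∈ (f j).support, 2 ≤ m.degree ∧ m.degree ≤ d) ∧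
        ∃ (a : ℂ) (b : ℝ), mkDerivation ℂ f P = (b * I) • Q + a • R ∧
          mkDerivation ℂ f Q = 0 ∧ mkDerivation ℂ f R = -conj a • Q := by
  have hB : ∀ i, (![Q, P, R] i).IsHomogeneous (![q, p, r] i) := by
    simp [Fin.forall_fin_succ, hP, hQ, hR]
  have hA : ∀ i, (![P, Q, R] i).IsHomogeneous (![p, q, r] i) := by
    simp [Fin.forall_fin_succ, hP, hQ, hR]
  have hn : Function.Injective ![q, p, r] := by
    intro i j
    fin_cases i <;> fin_cases j <;> simp <;> lia
  have hB0 : ∀ i, ![Q, P, R] i ≠ 0 := by simp [Fin.forall_fin_succ, hP0, hQ0, hR0]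
  refine and_congr_right fun hf => ?_
  simp only [sum_eval_mul_PhiD]
  rw [re_sum_eval_mul_conj_eq_zero_iff (linearIndependent_of_isHomogeneous hB hn hB0)]
  constructor
  · rintro ⟨t, ht, hD⟩
    have hconj (i k : Fin 3) : conj (t i k) = -t k i := congrFun (congrFun ht k) i
    have hzero (i k : Fin 3) (hik : ![q, p, r] k ≤ ![p, q, r] i) : t i k = 0 :=
      eq_zero_of_mkDerivation_eq_sum_smul hB hn hB0 (fun j m hm => (hf j m hm).1) (hA i) (hD i) hik
    have h01 : t 0 1 = 0 := hzero 0 1 le_rfl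
    have h10 : t 1 0 = 0 := hzero 1 0 le_rfl
    have h11 : t 1 1 = 0 := hzero 1 1 (hpr.trans hrq).le
    have h12 : t 1 2 = 0 := hzero 1 2 hrq.le
    have h21 : t 2 1 = 0 := hzero 2 1 hpr.le
    have h22 : t 2 2 = 0 := hzero 2 2 le_rfl
    have h20 : t 2 0 = -conj (t 0 2) := by simp [hconj]
    have h00 : t 0 0 = (t 0 0).im * I := by
      have hre : (t 0 0).re = 0 := self_eq_neg.1 (by simpa using congrArg re (hconj 0 0))
      apply Complex.ext <;> simp [hre]
    refine ⟨t 0 2, (t 0 0).im, ?_, ?_, ?_⟩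
    · simpa [Fin.sum_univ_three, h01, ← h00] using hD 0
    · simpa [Fin.sum_univ_three, h10, h11, h12] using hD 1
    · simpa [Fin.sum_univ_three, h21, h22, h20] using hD 2
  · rintro ⟨a, b, hDP, hDQ, hDR⟩
    refine ⟨!![b * I, 0, a; 0, 0, 0; -conj a, 0, 0], ?_, ?_⟩
    · ext i k
      fin_cases i <;> fin_cases k <;> simp
    · simp [Fin.forall_fin_succ, Fin.sum_univ_three, hDP, hDQ, hDR]

end Characterization

section Monomials

section Derivation

variable {R A M : Type*} [CommRing R] [CommRing A] [IsDomain A] [Algebra R A] [AddCommGroup M]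
  [Module A M] [Module R M] [Module.IsTorsionFree A M] {D : Derivation R A M} {x y z : A}

theorem derivation_apply_eq_zero_of_mul (hy : y ≠ 0) (hDxy : D (x * y) = 0) (hDy : D y = 0) :
    D x = 0 := by
  rw [D.leibniz, hDy, smul_zero, zero_add] at hDxy
  exact (smul_eq_zero.1 hDxy).resolve_left hy

theorem derivation_apply_eq_zero_of_monomials (hx : x ≠ 0) (hy : y ≠ 0) (hz : z ≠ 0)
    (hP : D (x * y * z ^ 2) = 0) (hQ : D (x ^ 2 * y * z ^ 3) = 0) (hR : D (x * y * z ^ 3) = 0) :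
    D x = 0 ∧ D y = 0 ∧ D z = 0 := by
  -- The monomials are `P = y (x z²)`, `R = z P` and `Q = x R`.
  have hDx : D x = 0 := derivation_apply_eq_zero_of_mul (y := x * y * z ^ 3)
    (by simp [hx, hy, hz]) (by rw [← hQ]; ring_nf) hR
  have hDz : D z = 0 := derivation_apply_eq_zero_of_mul (y := x * y * z ^ 2)
    (by simp [hx, hy, hz]) (by rw [← hR]; ring_nf) hP
  have hDy : D y = 0 := derivation_apply_eq_zero_of_mul (y := x * z ^ 2)
    (by simp [hx, hz]) (by rw [← hP]; ring_nf) (by simp [D.leibniz, D.leibniz_pow, hDx, hDz])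
  exact ⟨hDx, hDy, hDz⟩

end Derivation

local notation "P₀" => (X 0 * X 1 * X 2 ^ 2 : MvPolynomial (Fin 3) ℂ)
local notation "Q₀" => (X 0 ^ 2 * X 1 * X 2 ^ 3 : MvPolynomial (Fin 3) ℂ)
local notation "R₀" => (X 0 * X 1 * X 2 ^ 3 : MvPolynomial (Fin 3) ℂ)

/-- The element of `g_c` with parameters `s = (a, b)`, as a real-linear function of `s`: the unique
vector field whose derivation sends `P₀` to `i b Q₀ + a R₀`, `Q₀` to `0` and `R₀` to `-conj a Q₀`.
The three vectors are the fields that send exactly one of the three monomials to another one. -/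
@[simps]
def crField : ℂ × ℝ →ₗ[ℝ] Fin 3 → MvPolynomial (Fin 3) ℂ where
  toFun s := (s.2 * I) • ![0, 3 * (X 0 * X 1 * X 2), -(X 0 * X 2 ^ 2)] +
    s.1 • ![0, 3 * (X 1 * X 2), -X 2 ^ 2] + conj s.1 • ![X 0 ^ 2, X 0 * X 1, -(X 0 * X 2)]
  map_add' s t := by
    simp only [Prod.fst_add, Prod.snd_add, map_add, ofReal_add]
    module
  map_smul' c s := by
    simp only [Prod.smul_fst, Prod.smul_snd, RingHom.id_apply, map_mul, conj_ofReal, smul_eq_mul,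
      ofReal_mul, ← Complex.coe_smul]
    module

theorem mkDerivation_crField (a : ℂ) (b : ℝ) :
    mkDerivation ℂ (crField (a, b)) P₀ = (b * I) • Q₀ + a • R₀ ∧
      mkDerivation ℂ (crField (a, b)) Q₀ = 0 ∧
      mkDerivation ℂ (crField (a, b)) R₀ = -conj a • Q₀ := by
  refine ⟨?_, ?_, ?_⟩ <;>
    simp [crField_apply, Derivation.leibniz_pow, mkDerivation_X, smul_eq_C_mul] <;>
    ring

theorem eq_of_mkDerivation_eq {f g : Fin 3 → MvPolynomial (Fin 3) ℂ}
    (hP : mkDerivation ℂ f P₀ = mkDerivation ℂ g P₀)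
    (hQ : mkDerivation ℂ f Q₀ = mkDerivation ℂ g Q₀)
    (hR : mkDerivation ℂ f R₀ = mkDerivation ℂ g R₀) : f = g := by
  obtain ⟨h0, h1, h2⟩ := derivation_apply_eq_zero_of_monomials
    (D := mkDerivation ℂ f - mkDerivation ℂ g) (X_ne_zero 0) (X_ne_zero 1) (X_ne_zero 2)
    (sub_eq_zero.2 hP) (sub_eq_zero.2 hQ) (sub_eq_zero.2 hR)
  ext1 j
  fin_cases j
  · simpa [mkDerivation_X, sub_eq_zero] using h0
  · simpa [mkDerivation_X, sub_eq_zero] using h1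
  · simpa [mkDerivation_X, sub_eq_zero] using h2

theorem isHomogeneous_P : (P₀).IsHomogeneous 4 :=
  ((isHomogeneous_X ℂ 0).mul (isHomogeneous_X ℂ 1)).mul ((isHomogeneous_X ℂ 2).pow 2)

theorem isHomogeneous_Q : (Q₀).IsHomogeneous 6 :=
  (((isHomogeneous_X ℂ 0).pow 2).mul (isHomogeneous_X ℂ 1)).mul ((isHomogeneous_X ℂ 2).pow 3)

theorem isHomogeneous_R : (R₀).IsHomogeneous 5 :=
  ((isHomogeneous_X ℂ 0).mul (isHomogeneous_X ℂ 1)).mul ((isHomogeneous_X ℂ 2).pow 3)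

theorem crField_injective : Function.Injective crField := by
  rw [← LinearMap.ker_eq_bot, LinearMap.ker_eq_bot']
  rintro ⟨a, b⟩ hab
  have ha : a = 0 := by
    simpa [crField_apply] using congrArg (eval fun _ => (1 : ℂ)) (congrFun hab 0)
  have hb : b = 0 := by
    simpa [crField_apply, ha] using congrArg (eval fun _ => (1 : ℂ)) (congrFun hab 2)
  rw [ha, hb, Prod.mk_zero_zero]

theorem degree_of_mem_support_crField (s : ℂ × ℝ) (j : Fin 3) {m : Fin 3 →₀ ℕ}
    (hm : m ∈ (crField s j).support) : 2 ≤ m.degree ∧ m.degree ≤ 3 := by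
  have hX (i : Fin 3) : (X i : MvPolynomial (Fin 3) ℂ).IsHomogeneous 1 := isHomogeneous_X ℂ i
  have hthree : (3 : MvPolynomial (Fin 3) ℂ) = C 3 := (map_ofNat C 3).symm
  by_contra hdeg
  have h2 {p : MvPolynomial (Fin 3) ℂ} (hp : p.IsHomogeneous 2) : coeff m p = 0 :=
    hp.coeff_eq_zero (by lia)
  have h3 {p : MvPolynomial (Fin 3) ℂ} (hp : p.IsHomogeneous 3) : coeff m p = 0 :=
    hp.coeff_eq_zero (by lia)
  refine mem_support_iff.1 hm ?_
  fin_cases j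
  · simp [h2 ((hX 0).pow 2)]
  · simp [hthree, h3 (((hX 0).mul (hX 1)).mul (hX 2)), h2 ((hX 1).mul (hX 2)),
      h2 ((hX 0).mul (hX 1))]
  · simp [h3 ((hX 0).mul ((hX 2).pow 2)), h2 ((hX 2).pow 2), h2 ((hX 0).mul (hX 2))]

theorem gcSet_eq_range_crField {d : ℕ} (hd : 3 ≤ d) : gcSet P₀ Q₀ R₀ d = Set.range crField := by
  ext f
  rw [mem_gcSet_iff isHomogeneous_P isHomogeneous_Q isHomogeneous_R (by simp) (by simp) (by simp)
    (by simp) (by simp)]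
  constructor
  · rintro ⟨-, a, b, hP, hQ, hR⟩
    obtain ⟨hP', hQ', hR'⟩ := mkDerivation_crField a b
    exact ⟨(a, b), eq_of_mkDerivation_eq (hP'.trans hP.symm) (hQ'.trans hQ.symm)
      (hR'.trans hR.symm)⟩
  · rintro ⟨⟨a, b⟩, rfl⟩
    exact ⟨fun j m hm => (degree_of_mem_support_crField _ j hm).imp_right hd.trans', a, b,
      mkDerivation_crField a b⟩

end Monomials

theorem stmt12_general (d : ℕ) (hd : 3 ≤ d) :
    Module.rank ℝ ↥(Submodule.span ℝ (gcSet (X 0 * X 1 * X 2 ^ 2)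
      (X 0 ^ 2 * X 1 * X 2 ^ 3) (X 0 * X 1 * X 2 ^ 3) d)) = 3 := by
  rw [gcSet_eq_range_crField hd, ← LinearMap.coe_range, Submodule.span_eq,
    rank_range_of_injective _ crField_injective, rank_prod', rank_real_complex, Module.rank_self]
  norm_num

/-- For `P = z₁z₂z₃²`, `Q = z₁²z₂z₃³`, `R = z₁z₂z₃³` (so `d = 10`),
the space `g_c` has real dimension exactly `3`. -/
theorem stmt12 :
    Module.rank ℝ ↥(Submodule.span ℝ (gcSet (X 0 * X 1 * X 2 ^ 2)
      (X 0 ^ 2 * X 1 * X 2 ^ 3) (X 0 * X 1 * X 2 ^ 3) 10)) = 3 :=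
  stmt12_general 10 (by norm_num)
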